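/- arXiv:2102.10900 — 3 statements merged into one kernel-verified Lean document; each statement's English description precedes it below -/
import Mathlib

section
/- Let φ, ψ : G → G be endomorphisms of a group G such that the image of ψ is contained in the center of G. Then H = {φ(g)⁻¹·ψ(g) : g ∈ G} is a subgroup of G, the (φ,ψ)-twisted conjugacy classes of G are exactly the right cosets H·x for x ∈ G, and consequently R(φ,ψ) equals the index [G : H]. -/
/-!
Since `ψ` has central image, `g ↦ φ(g)⁻¹ ψ(g)` is an anti-homomorphism, so its image `H` is a
subgroup. Centrality also gives `φ(g)⁻¹ x ψ(g) = (φ(g)⁻¹ ψ(g)) x`, so twisted conjugacy is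
the relation `y x⁻¹ ∈ H` of lying in the same right coset of `H`. Right cosets are in bijection
with left cosets, which are what `Subgroup.index` counts.
-/

/-- Elements `x, y` of a group `G` are `(φ,ψ)`-twisted conjugate if there is `g : G`
with `x = (φ g)⁻¹ * y * (ψ g)`. -/
def TwistedConj {G : Type*} [Group G] (φ ψ : G → G) (x y : G) : Prop :=
  ∃ g : G, x = (φ g)⁻¹ * y * ψ g

/-- The subgroup `{φ(g)⁻¹ ψ(g) : g ∈ G}`, for `ψ` with central image. -/
def twistedSubgroup {G : Type*} [Group G] (φ ψ : Monoid.End G)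
    (hcentral : ∀ g : G, ψ g ∈ Subgroup.center G) : Subgroup G where
  carrier := {h : G | ∃ g : G, h = (φ g)⁻¹ * ψ g}
  one_mem' := ⟨1, by simp⟩
  mul_mem' := by
    rintro _ _ ⟨a, rfl⟩ ⟨b, rfl⟩
    -- The order of the factors is reversed: the map is an anti-homomorphism.
    refine ⟨b * a, ?_⟩
    have h := Subgroup.mem_center_iff.mp (hcentral a) ((φ b)⁻¹ * ψ b)
    rw [map_mul, map_mul, mul_inv_rev, mul_assoc, ← h]
    simp only [mul_assoc]
  inv_mem' := by
    rintro _ ⟨a, rfl⟩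
    refine ⟨a⁻¹, ?_⟩
    have h := Subgroup.mem_center_iff.mp (inv_mem (hcentral a)) (φ a)
    rw [map_inv, map_inv, mul_inv_rev, inv_inv, ← h]

theorem twistedConj_iff {G : Type*} [Group G] (φ ψ : Monoid.End G)
    (hcentral : ∀ g : G, ψ g ∈ Subgroup.center G) (y x : G) :
    TwistedConj φ ψ y x ↔ ∃ h ∈ twistedSubgroup φ ψ hcentral, y = h * x := by
  have key (g : G) : (φ g)⁻¹ * x * ψ g = (φ g)⁻¹ * ψ g * x := by
    rw [mul_assoc, Subgroup.mem_center_iff.mp (hcentral g) x, mul_assoc]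
  constructor
  · rintro ⟨g, rfl⟩
    exact ⟨_, ⟨g, rfl⟩, key g⟩
  · rintro ⟨_, ⟨g, rfl⟩, rfl⟩
    exact ⟨g, (key g).symm⟩

/-- If the image of `ψ` is central in `G`, then
`H = {φ(g)⁻¹ ψ(g) : g ∈ G}` is a subgroup of `G`, the `(φ,ψ)`-twisted conjugacy
classes are exactly the right cosets `H·x`, and the Reidemeister number
`R(φ,ψ)` equals the index `[G : H]`. -/
theorem statement0 {G : Type*} [Group G] (φ ψ : Monoid.End G)
    (hcentral : ∀ g : G, ψ g ∈ Subgroup.center G) :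
    ∃ H : Subgroup G,
      (H : Set G) = {h : G | ∃ g : G, h = (φ g)⁻¹ * ψ g} ∧
      (∀ x : G, {y : G | TwistedConj ⇑φ ⇑ψ y x} = {y : G | ∃ h ∈ H, y = h * x}) ∧
      Nat.card (Quot (TwistedConj ⇑φ ⇑ψ)) = H.index := by
  refine ⟨twistedSubgroup φ ψ hcentral, rfl, fun x => ?_, ?_⟩
  · ext y
    exact twistedConj_iff φ ψ hcentral y x
  · have e : Quot (TwistedConj ⇑φ ⇑ψ) ≃
        Quotient (QuotientGroup.rightRel (twistedSubgroup φ ψ hcentral)) :=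
      Quot.congrRight fun x y => by
        rw [twistedConj_iff φ ψ hcentral]
        refine Iff.trans ?_ (Setoid.comm' _)
        refine Iff.trans ?_ QuotientGroup.rightRel_apply.symm
        constructor
        · rintro ⟨h, hh, rfl⟩
          simpa using hh
        · intro h
          exact ⟨_, h, by simp⟩
    exact Nat.card_congr
      (e.trans (QuotientGroup.quotientRightRelEquivQuotientLeftRel _))
end

section
/- Let G be an abelian group of finite Prüfer rank and let φ, ψ : G → G be endomorphisms with R(φ,ψ) < ∞. Let T ≤ G be the torsion subgroup, let φ̃, ψ̃ : G/T → G/T be the induced endomorphisms of the quotient, and let φ₀, ψ₀ : T → T be the restrictions. Then R(φ,ψ) = R(φ̃,ψ̃) · R(φ₀,ψ₀); in particular both R(φ̃,ψ̃) and R(φ₀,ψ₀) are finite. -/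
/-- A group has finite Prüfer rank if there is `r` such that every finitely
generated subgroup can be generated by at most `r` elements. -/
def HasFinitePrueferRank (G : Type*) [Group G] : Prop :=
  ∃ r : ℕ, ∀ H : Subgroup G, H.FG →
    ∃ S : Finset G, S.card ≤ r ∧ Subgroup.closure (S : Set G) = H

/-- The endomorphism `g ↦ ψ g / φ g` of a commutative group. -/
def diffEnd {G : Type*} [CommGroup G] (φ ψ : Monoid.End G) : G →* G :=
  (show G →* G from ψ) / (show G →* G from φ)

lemma diffEnd_apply {G : Type*} [CommGroup G] (φ ψ : Monoid.End G) (g : G) :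
    diffEnd φ ψ g = ψ g / φ g := rfl

lemma twistedConj_iff_s10 {G : Type*} [CommGroup G] (φ ψ : Monoid.End G) (x y : G) :
    TwistedConj φ ψ x y ↔ (QuotientGroup.leftRel (diffEnd φ ψ).range) x y := by
  rw [QuotientGroup.leftRel_apply]
  constructor
  · rintro ⟨g, rfl⟩
    refine ⟨g⁻¹, ?_⟩
    rw [map_inv, diffEnd_apply]
    simp [div_eq_mul_inv, mul_comm, mul_left_comm]
  · rintro ⟨g, hg⟩
    refine ⟨g⁻¹, ?_⟩
    rw [diffEnd_apply] at hg
    have hy : y = x * (ψ g / φ g) := by rw [hg]; simp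
    rw [hy, map_inv, map_inv, inv_inv, div_eq_mul_inv]
    have key : ∀ a b : G, x = a * (x * (b * a⁻¹)) * b⁻¹ := fun a b => by
      rw [mul_comm b, ← mul_assoc x, mul_comm a]
      simp [mul_assoc, mul_comm b a]
    exact key _ _

/-- The twisted conjugacy classes are the cosets of the range of `diffEnd φ ψ`. -/
def quotTwistedConjEquiv {G : Type*} [CommGroup G] (φ ψ : Monoid.End G) :
    Quot (TwistedConj φ ψ) ≃ G ⧸ (diffEnd φ ψ).range :=
  Quot.congrRight (twistedConj_iff_s10 φ ψ)

lemma card_quot_twistedConj {G : Type*} [CommGroup G] (φ ψ : Monoid.End G) :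
    Nat.card (Quot (TwistedConj φ ψ)) = (diffEnd φ ψ).range.index :=
  Nat.card_congr (quotTwistedConjEquiv φ ψ)

lemma finite_quot_twistedConj_iff {G : Type*} [CommGroup G] (φ ψ : Monoid.End G) :
    Finite (Quot (TwistedConj φ ψ)) ↔ (diffEnd φ ψ).range.index ≠ 0 := by
  rw [(quotTwistedConjEquiv φ ψ).finite_iff, Subgroup.index_ne_zero_iff_finite]

lemma HasFinitePrueferRank.rank_lt_aleph0 {G : Type*} [CommGroup G]
    (h : HasFinitePrueferRank G) : Module.rank ℤ (Additive G) < Cardinal.aleph0 := by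
  obtain ⟨r, hr⟩ := h
  refine lt_of_le_of_lt (rank_le (n := r) fun s hs => ?_) (Cardinal.natCast_lt_aleph0)
  classical
  obtain ⟨S, hSr, hS⟩ := hr (Subgroup.closure (Additive.toMul '' (s : Set (Additive G))))
    ((Subgroup.fg_iff _).2 ⟨_, rfl, s.finite_toSet.image _⟩)
  -- The generating sets `s` and `S` have the same `ℤ`-span, and `s` is independent.
  have hspan : Submodule.span ℤ (s : Set (Additive G)) =
      Submodule.span ℤ ((S.image Additive.ofMul : Finset (Additive G)) : Set (Additive G)) := by
    apply Submodule.toAddSubgroup_injective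
    rw [Submodule.span_int_eq_addSubgroupClosure, Submodule.span_int_eq_addSubgroupClosure]
    have h2 := congrArg Subgroup.toAddSubgroup hS
    rw [Subgroup.toAddSubgroup_closure, Subgroup.toAddSubgroup_closure] at h2
    rw [Equiv.preimage_image] at h2
    have himage : ((S.image Additive.ofMul : Finset (Additive G)) : Set (Additive G)) =
        Additive.toMul ⁻¹' (S : Set G) := by
      rw [Finset.coe_image]
      exact Additive.ofMul.image_eq_preimage_symm _
    rw [himage]
    exact h2.symm
  rw [← finrank_span_finset_eq_card hs, hspan]
  exact (finrank_span_finset_le_card _).trans (Finset.card_image_le.trans hSr)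

/-- Over a group of finite rank, an endomorphism whose range has finite index has torsion kernel,
by rank-nullity over `ℤ`. -/
lemma ker_le_torsion {G : Type*} [CommGroup G]
    (hrank : Module.rank ℤ (Additive G) < Cardinal.aleph0)
    (δ : G →* G) (hδ : δ.range.index ≠ 0) : δ.ker ≤ CommGroup.torsion G := by
  let f : Additive G →ₗ[ℤ] Additive G := (MonoidHom.toAdditive δ).toIntLinearMap
  have h0 : Module.rank ℤ (Additive G ⧸ LinearMap.range f) = 0 := by
    rw [rank_eq_zero_iff]
    intro x
    obtain ⟨g, rfl⟩ := Submodule.Quotient.mk_surjective _ x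
    refine ⟨δ.range.index, by exact_mod_cast hδ, ?_⟩
    rw [← Submodule.Quotient.mk_smul, Submodule.Quotient.mk_eq_zero]
    obtain ⟨y, hy⟩ := Subgroup.pow_index_mem δ.range g.toMul
    exact ⟨Additive.ofMul y, by
      rw [natCast_zsmul]
      exact congrArg Additive.ofMul hy⟩
  have h1 := Submodule.rank_quotient_add_rank (LinearMap.range f)
  have h2 := LinearMap.rank_range_add_rank_ker f
  rw [h0, zero_add] at h1
  have h3 : Module.rank ℤ (LinearMap.ker f) = 0 := by
    rw [h1] at h2
    exact Cardinal.eq_of_add_eq_add_left (h2.trans (add_zero _).symm) hrank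
  intro g hg
  obtain ⟨a, ha, hag⟩ := rank_eq_zero_iff.1 h3 ⟨Additive.ofMul g, congrArg Additive.ofMul hg⟩
  have hag' : g ^ a = 1 := congrArg (fun z : LinearMap.ker f => (z : Additive G).toMul) hag
  exact isOfFinOrder_iff_zpow_eq_one.2 ⟨a, ha, hag'⟩

/-- If `δ` has torsion kernel, then only torsion elements have torsion image. -/
lemma mem_torsion_of_map_mem {G : Type*} [CommGroup G] (δ : G →* G)
    (h : δ.ker ≤ CommGroup.torsion G) {g : G} (hg : δ g ∈ CommGroup.torsion G) :
    g ∈ CommGroup.torsion G := by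
  obtain ⟨n, hn, hgn⟩ := isOfFinOrder_iff_pow_eq_one.1 hg
  have h1 : IsOfFinOrder (g ^ n) := h (by rw [MonoidHom.mem_ker, map_pow, hgn])
  exact (isOfFinOrder_pow.1 h1).resolve_right hn.ne'

/-- Let `G` be an abelian group of finite Prüfer rank and
`φ, ψ` endomorphisms with `R(φ,ψ) < ∞`.  Let `T` be the torsion subgroup,
`φ̃, ψ̃` the induced endomorphisms of `G/T` and `φ₀, ψ₀` the restrictions to
`T`.  Then `R(φ,ψ) = R(φ̃,ψ̃) · R(φ₀,ψ₀)`; in particular both factors are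
finite. -/
theorem statement10 {G : Type*} [CommGroup G]
    (hrank : HasFinitePrueferRank G)
    (φ ψ : Monoid.End G)
    (hfin : Finite (Quot (TwistedConj ⇑φ ⇑ψ)))
    (φt ψt : Monoid.End (G ⧸ CommGroup.torsion G))
    (hφt : ∀ g : G, φt ((g : G ⧸ CommGroup.torsion G)) = ((φ g : G) : G ⧸ CommGroup.torsion G))
    (hψt : ∀ g : G, ψt ((g : G ⧸ CommGroup.torsion G)) = ((ψ g : G) : G ⧸ CommGroup.torsion G))
    (φ₀ ψ₀ : Monoid.End (CommGroup.torsion G))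
    (hφ₀ : ∀ t : CommGroup.torsion G, (φ₀ t : G) = φ (t : G))
    (hψ₀ : ∀ t : CommGroup.torsion G, (ψ₀ t : G) = ψ (t : G)) :
    Finite (Quot (TwistedConj ⇑φt ⇑ψt)) ∧
    Finite (Quot (TwistedConj ⇑φ₀ ⇑ψ₀)) ∧
    Nat.card (Quot (TwistedConj ⇑φ ⇑ψ)) =
      Nat.card (Quot (TwistedConj ⇑φt ⇑ψt)) * Nat.card (Quot (TwistedConj ⇑φ₀ ⇑ψ₀)) := by

  rw [finite_quot_twistedConj_iff] at hfin
  rw [finite_quot_twistedConj_iff, finite_quot_twistedConj_iff, card_quot_twistedConj,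
    card_quot_twistedConj, card_quot_twistedConj]
  set δ := diffEnd φ ψ with hδ
  have hker := ker_le_torsion hrank.rank_lt_aleph0 δ hfin
  have hquot : (diffEnd φt ψt).range = δ.range.map (QuotientGroup.mk' (CommGroup.torsion G)) := by
    have hcomp : ∀ g : G, diffEnd φt ψt (g : G ⧸ CommGroup.torsion G) = ((δ g : G) : G ⧸ _) := by
      intro g
      rw [diffEnd_apply, hδ, diffEnd_apply, hφt, hψt, QuotientGroup.mk_div]
    ext x
    constructor
    · rintro ⟨y, rfl⟩
      obtain ⟨g, rfl⟩ := QuotientGroup.mk_surjective y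
      exact ⟨δ g, ⟨g, rfl⟩, (hcomp g).symm⟩
    · rintro ⟨_, ⟨g, rfl⟩, rfl⟩
      exact ⟨g, hcomp g⟩
  have hrestr : (diffEnd φ₀ ψ₀).range = δ.range.subgroupOf (CommGroup.torsion G) := by
    have hcoe : ∀ t : CommGroup.torsion G, (diffEnd φ₀ ψ₀ t : G) = δ t := by
      intro t
      rw [diffEnd_apply, hδ, diffEnd_apply, Subgroup.coe_div, hφ₀, hψ₀]
    ext t
    rw [Subgroup.mem_subgroupOf]
    constructor
    · rintro ⟨s, rfl⟩
      exact ⟨s, (hcoe s).symm⟩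
    · rintro ⟨g, hg⟩
      exact ⟨⟨g, mem_torsion_of_map_mem δ hker (hg ▸ t.2)⟩, Subtype.ext ((hcoe _).trans hg)⟩
  have hmain : δ.range.index = (diffEnd φt ψt).range.index * (diffEnd φ₀ ψ₀).range.index := by
    rw [hquot, hrestr, Subgroup.index_map, QuotientGroup.ker_mk',
      MonoidHom.range_eq_top.2 (QuotientGroup.mk'_surjective _), Subgroup.index_top, mul_one,
      ← Subgroup.relIndex, ← Subgroup.relIndex_sup_left, mul_comm]
    exact (Subgroup.relIndex_mul_index le_sup_left).symm
  rw [hmain] at hfin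
  exact ⟨left_ne_zero_of_mul hfin, right_ne_zero_of_mul hfin, hmain⟩
end

section
/- Let p be a prime, let d ≥ 1, and let α, β : ℤ_p^d → ℤ_p^d be ℤ_p-linear maps, regarded as endomorphisms of the additive group ℤ_p^d, such that det(β − α) ≠ 0. Then the (α,β)-twisted conjugacy classes are exactly the cosets of the image of β − α, and R(α,β) = |det(β − α)|_p^{-1}, where |·|_p is the p-adic absolute value on ℚ_p; in particular the index of (β − α)(ℤ_p^d) in ℤ_p^d equals |det(β − α)|_p^{-1}. -/
/-!
The twisted conjugacy relation reads `x = -α g + y + β g`, i.e. `x - y = (β - α) g`, so its classes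
are the cosets of the image of `f = β - α` and both cardinalities are the index of that image.

Since `det f ≠ 0`, `f` is injective and its image `N` has full rank. By the Smith normal form over
the principal ideal domain `ℤ_[p]` there are a basis `b'` of the ambient module and coefficients
`a i` such that the vectors `a i • b' i` form a basis of `N`. Hence the quotient by `N` is the
product of the `ℤ_[p] ⧸ (a i)`, while `det f` agrees with `∏ i, a i` up to a unit, which has
norm 1. This reduces the index formula to `#(ℤ_[p] ⧸ (a)) = ‖a‖⁻¹` for `a ≠ 0`, which holds because
`(a) = (p ^ n)` with `n` the valuation of `a`, and `ℤ_[p] ⧸ (p ^ n) ≃ ZMod (p ^ n)`.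
-/

/-- Elements of an additive group are `(φ,ψ)`-twisted conjugate if there is `g`
with `x = -(φ g) + y + ψ g`. -/
def AddTwistedConj {G : Type*} [AddGroup G] (φ ψ : G → G) (x y : G) : Prop :=
  ∃ g : G, x = -(φ g) + y + ψ g

theorem PadicInt.card_quotient_span_singleton {p : ℕ} [Fact p.Prime] {a : ℤ_[p]} (ha : a ≠ 0) :
    (Nat.card (ℤ_[p] ⧸ Ideal.span {a}) : ℝ) = ‖a‖⁻¹ := by
  have hspan : Ideal.span {a} = RingHom.ker (PadicInt.toZModPow (p := p) a.valuation) := by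
    rw [PadicInt.ker_toZModPow, Ideal.span_singleton_eq_span_singleton]
    refine ⟨(PadicInt.unitCoeff ha)⁻¹, ?_⟩
    rw [Units.mul_inv_eq_iff_eq_mul, mul_comm]
    exact PadicInt.unitCoeff_spec ha
  have hcard : Nat.card (ℤ_[p] ⧸ Ideal.span {a}) = p ^ a.valuation := by
    rw [hspan, Nat.card_congr (RingHom.quotientKerEquivOfSurjective
      (ZMod.ringHom_surjective (PadicInt.toZModPow (p := p) a.valuation))).toEquiv, Nat.card_zmod]
  rw [hcard, PadicInt.norm_eq_zpow_neg_valuation ha, zpow_neg, inv_inv, zpow_natCast, Nat.cast_pow]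

theorem PadicInt.norm_eq_of_associated {p : ℕ} [Fact p.Prime] {a b : ℤ_[p]}
    (h : Associated a b) : ‖a‖ = ‖b‖ := by
  obtain ⟨u, rfl⟩ := h
  rw [norm_mul, PadicInt.norm_units, mul_one]

/-- The index formula, for an injective endomorphism of a finite free `ℤ_[p]`-module. -/
theorem PadicInt.card_quotient_range {p : ℕ} [Fact p.Prime] {ι M : Type*} [Fintype ι]
    [AddCommGroup M] [Module ℤ_[p] M] (b : Module.Basis ι ℤ_[p] M)
    (f : M →ₗ[ℤ_[p]] M) (hf : Function.Injective f) :
    (Nat.card (M ⧸ LinearMap.range f) : ℝ) = ‖LinearMap.det f‖⁻¹ := by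
  classical
  let N := LinearMap.range f
  let e : M ≃ₗ[ℤ_[p]] N := LinearEquiv.ofInjective f hf
  have h : Module.finrank ℤ_[p] N = Module.finrank ℤ_[p] M := e.symm.finrank_eq
  let a := Submodule.smithNormalFormCoeffs b h
  let b' := Submodule.smithNormalFormTopBasis b h
  let ab := Submodule.smithNormalFormBotBasis b h
  have ab_eq : ∀ i, (ab i : M) = a i • b' i := Submodule.smithNormalFormBotBasis_def b h
  have ha : ∀ i, a i ≠ 0 := fun i hi => ab.ne_zero i (Subtype.ext (by rw [ab_eq, hi]; simp))
  let e' : M ≃ₗ[ℤ_[p]] N := b'.equiv ab (Equiv.refl _)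
  have hdet' : LinearMap.det (N.subtype ∘ₗ (e' : M →ₗ[ℤ_[p]] N)) = ∏ i, a i := by
    rw [← LinearMap.det_toMatrix b', ← Matrix.det_diagonal]
    congr 1
    ext i j
    have hj : (N.subtype ∘ₗ (e' : M →ₗ[ℤ_[p]] N)) (b' j) = a j • b' j := by
      simp [e', ab_eq]
    rw [LinearMap.toMatrix_apply, hj, map_smul, Module.Basis.repr_self, Finsupp.smul_single,
      smul_eq_mul, mul_one]
    by_cases hij : i = j
    · rw [hij, Matrix.diagonal_apply_eq, Finsupp.single_eq_same]
    · rw [Matrix.diagonal_apply_ne _ hij, Finsupp.single_eq_of_ne hij]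
  have hassoc : Associated (LinearMap.det f) (∏ i, a i) := by
    rw [← hdet']
    exact LinearMap.associated_det_comp_equiv N.subtype e e'
  rw [PadicInt.norm_eq_of_associated hassoc, norm_prod, ← Finset.prod_inv_distrib,
    Nat.card_congr (Submodule.quotientEquivPiSpan N b h).toEquiv, Nat.card_pi, Nat.cast_prod]
  exact Finset.prod_congr rfl fun i _ => PadicInt.card_quotient_span_singleton (ha i)

/-- Let `p` be a prime, `d ≥ 1`, and `α, β` be `ℤ_p`-linear
endomorphisms of `ℤ_p^d` with `det(β − α) ≠ 0`.  Then the `(α,β)`-twisted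
conjugacy classes are exactly the cosets of the image of `β − α`,
`R(α,β) = |det(β − α)|_p⁻¹`, and the index of `(β − α)(ℤ_p^d)` in `ℤ_p^d`
equals `|det(β − α)|_p⁻¹`. -/
theorem statement12 (p : ℕ) [Fact p.Prime] (d : ℕ) (hd : 1 ≤ d)
    (α β : (Fin d → ℤ_[p]) →ₗ[ℤ_[p]] (Fin d → ℤ_[p]))
    (hdet : LinearMap.det (β - α) ≠ 0) :
    (∀ x y : Fin d → ℤ_[p],
      AddTwistedConj ⇑α ⇑β x y ↔ x - y ∈ LinearMap.range (β - α)) ∧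
    (Nat.card (Quot (AddTwistedConj ⇑α ⇑β)) : ℝ) = ‖LinearMap.det (β - α)‖⁻¹ ∧
    (Nat.card ((Fin d → ℤ_[p]) ⧸ LinearMap.range (β - α)) : ℝ) =
      ‖LinearMap.det (β - α)‖⁻¹ := by
  have hconj : ∀ x y : Fin d → ℤ_[p],
      AddTwistedConj ⇑α ⇑β x y ↔ x - y ∈ LinearMap.range (β - α) := by
    intro x y
    refine exists_congr fun g => ?_
    rw [LinearMap.sub_apply]
    constructor
    · rintro rfl
      abel
    · intro h
      rw [eq_add_of_sub_eq h.symm]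
      abel
  have hinj : Function.Injective (β - α) :=
    LinearMap.ker_eq_bot.mp (not_ne_iff.mp (mt LinearMap.det_eq_zero_iff_ker_ne_bot.mpr hdet))
  have hindex := PadicInt.card_quotient_range (Pi.basisFun ℤ_[p] (Fin d)) (β - α) hinj
  refine ⟨hconj, ?_, hindex⟩
  rw [← hindex]
  congr 1
  refine Nat.card_congr (Quot.congr (Equiv.refl _) fun x y => ?_)
  rw [hconj, ← Submodule.quotientRel_def]
  rfl
end
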